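/- arXiv:1309.5292 — 2 statements merged into one kernel-verified Lean document; each statement's English description precedes it below -/
import Mathlib

section
/- For all sufficiently large n, f(n) ≥ 0.0818757697·n; that is, there exists N such that for every n ≥ N there is a family 𝒳 of n subsets of an n-element ground set, each of size at most 3, with Δ(𝒳) ≥ 0.0818757697·n. -/
open Finset

/-- The union of the first `k` sets in the ordering `π` (positions `1,…,k`,
i.e. 0-based indices `< k`). -/
def unionUpTo {α : Type*} [DecidableEq α] {m : ℕ} (X : Fin m → Finset α)
    (π : Equiv.Perm (Fin m)) (k : ℕ) : Finset α :=
  (Finset.univ.filter (fun i : Fin m => (i : ℕ) < k)).biUnion (fun i => X (π i))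

/-- `Δ(𝒳,π,k) = |X_{π(1)} ∪ ⋯ ∪ X_{π(k)}| − k`. -/
def delta {α : Type*} [DecidableEq α] {m : ℕ} (X : Fin m → Finset α)
    (π : Equiv.Perm (Fin m)) (k : ℕ) : ℤ :=
  ((unionUpTo X π k).card : ℤ) - k

/-- `Δ(𝒳,π) = max_{1 ≤ k ≤ m} Δ(𝒳,π,k)`. -/
noncomputable def DeltaPerm {α : Type*} [DecidableEq α] {m : ℕ} (X : Fin m → Finset α)
    (π : Equiv.Perm (Fin m)) : ℤ :=
  sSup {d : ℤ | ∃ k : ℕ, 1 ≤ k ∧ k ≤ m ∧ d = delta X π k}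

/-- `Δ(𝒳) = min_π Δ(𝒳,π)`. -/
noncomputable def DeltaMin {α : Type*} [DecidableEq α] {m : ℕ} (X : Fin m → Finset α) : ℤ :=
  sInf {d : ℤ | ∃ π : Equiv.Perm (Fin m), d = DeltaPerm X π}

/-- `f_c(n,m) = max_{𝒳 ∈ S(n,m,c)} Δ(𝒳)`, families of `m` subsets of an
`n`-element ground set, each of size at most `c`. -/
noncomputable def fFam (n m c : ℕ) : ℤ :=
  sSup {d : ℤ | ∃ X : Fin m → Finset (Fin n), (∀ i, (X i).card ≤ c) ∧ d = DeltaMin X}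

/-!
The family is random. Cut the `n (c + 1)` slots `Fin n × Fin (c + 1)` into the `n` blocks
`{i} × Fin (c + 1)`, permute the slots by a uniformly random `σ`, and let `X i` be the set of points
(first coordinates) hit by the image of block `i`. A union of `k` members is then the set of points
hit by a uniformly random set of `k (c + 1)` slots. The generating function
`∑ T, z ^ #(points of T) * x ^ #T = (1 + z ((1 + x) ^ (c + 1) - 1)) ^ n` bounds the number of slot
sets hitting few points, and a union bound over the `n.choose k` choices of `k` blocks yields a `σ`
for which every union of `k ≈ p n` members has at least `k + δ n` points, as soon as an exponential
rate depending on `p, δ, x, z` is below `1`. For `c = 2` this rate condition holds at `p = 28/61`,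
`δ = 5/61 > 0.0818757697`, `x = 5`, `z = 1/180`.
-/

open Filter Topology

section Delta

variable {α : Type*} [DecidableEq α] {m : ℕ}

lemma unionUpTo_eq_biUnion_map (X : Fin m → Finset α) (π : Equiv.Perm (Fin m)) (k : ℕ) :
    unionUpTo X π k =
      (({i : Fin m | (i : ℕ) < k} : Finset (Fin m)).map π.toEmbedding).biUnion X := by
  rw [map_eq_image, image_biUnion]
  rfl

lemma delta_le_DeltaPerm (X : Fin m → Finset α) (π : Equiv.Perm (Fin m)) {k : ℕ}
    (hk : 1 ≤ k) (hkm : k ≤ m) : delta X π k ≤ DeltaPerm X π := by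
  have hfin : {d : ℤ | ∃ k : ℕ, 1 ≤ k ∧ k ≤ m ∧ d = delta X π k}.Finite := by
    refine ((Set.finite_Icc 1 m).image (delta X π)).subset ?_
    rintro d ⟨k, hk, hkm, rfl⟩
    exact ⟨k, ⟨hk, hkm⟩, rfl⟩
  exact le_csSup hfin.bddAbove ⟨k, hk, hkm, rfl⟩

lemma exists_DeltaMin_eq (X : Fin m → Finset α) :
    ∃ π : Equiv.Perm (Fin m), DeltaMin X = DeltaPerm X π := by
  have hfin : {d : ℤ | ∃ π : Equiv.Perm (Fin m), d = DeltaPerm X π}.Finite := by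
    refine (Set.finite_range (DeltaPerm X)).subset ?_
    rintro d ⟨π, rfl⟩
    exact ⟨π, rfl⟩
  have hne : {d : ℤ | ∃ π : Equiv.Perm (Fin m), d = DeltaPerm X π}.Nonempty :=
    ⟨DeltaPerm X 1, 1, rfl⟩
  exact hne.csInf_mem hfin

lemma sub_le_DeltaMin_of_forall_le_card_biUnion {X : Fin m → Finset α} {k : ℕ} {u : ℝ}
    (hk : 1 ≤ k) (hkm : k ≤ m)
    (hX : ∀ A : Finset (Fin m), #A = k → u ≤ #(A.biUnion X)) : u - k ≤ DeltaMin X := by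
  obtain ⟨π, hπ⟩ := exists_DeltaMin_eq X
  have hcard : #(({i : Fin m | (i : ℕ) < k} : Finset (Fin m)).map π.toEmbedding) = k := by
    rw [card_map, Fin.card_filter_val_lt, min_eq_right hkm]
  calc u - k ≤ delta X π k := by
        have hu := hX _ hcard
        rw [← unionUpTo_eq_biUnion_map] at hu
        simpa [delta] using hu
    _ ≤ DeltaMin X := by
        rw [hπ]
        exact_mod_cast delta_le_DeltaPerm X π hk hkm

lemma DeltaMin_le_fFam {n c : ℕ} {X : Fin m → Finset (Fin n)} (hX : ∀ i, #(X i) ≤ c) :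
    DeltaMin X ≤ fFam n m c := by
  have hfin : {d : ℤ | ∃ Y : Fin m → Finset (Fin n),
      (∀ i, #(Y i) ≤ c) ∧ d = DeltaMin Y}.Finite := by
    refine (Set.finite_range fun Y : Fin m → Finset (Fin n) ↦ DeltaMin Y).subset ?_
    rintro d ⟨Y, -, rfl⟩
    exact ⟨Y, rfl⟩
  exact le_csSup hfin.bddAbove ⟨X, hX, rfl⟩

end Delta

section Separation

open MulAction

variable {G Y : Type*} [Group G] [MulAction G Y] [IsPretransitive G Y]

variable (G) in
lemma card_smul_eq_mul_card [Fintype G] [Fintype Y] [DecidableEq Y] (x y : Y) :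
    #{g : G | g • x = y} * Fintype.card Y = Fintype.card G := by
  have hconst : ∀ y' : Y, #{g : G | g • x = y'} = #{g : G | g • x = y} := by
    intro y'
    obtain ⟨h, rfl⟩ := exists_smul_eq G y' y
    exact card_equiv (Equiv.mulLeft h) fun g ↦ by simp [mul_smul]
  calc #{g : G | g • x = y} * Fintype.card Y = ∑ y', #{g : G | g • x = y'} := by
        simp only [hconst, sum_const, card_univ, smul_eq_mul, mul_comm]
    _ = Fintype.card G :=
        (card_eq_sum_card_fiberwise fun _ _ ↦ mem_coe.2 (mem_univ _)).symm

variable (G) in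
lemma exists_smul_forall_notMem [Finite G] (S B : Finset Y) (h : #S * #B < Nat.card Y) :
    ∃ g : G, ∀ s ∈ S, g • s ∉ B := by
  classical
  have := Fintype.ofFinite G
  have := Nat.finite_of_card_ne_zero h.ne_bot
  have := Fintype.ofFinite Y
  rw [Nat.card_eq_fintype_card] at h
  by_contra! hmeet
  have hcover : (univ : Finset G) ⊆ (S ×ˢ B).biUnion fun q : Y × Y ↦ {g : G | g • q.1 = q.2} := by
    intro g _
    obtain ⟨s, hs, hB⟩ := hmeet g
    exact mem_biUnion.2 ⟨(s, g • s), mem_product.2 ⟨hs, hB⟩, by simp⟩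
  have hle : Fintype.card G * Fintype.card Y ≤ Fintype.card G * (#S * #B) :=
    calc Fintype.card G * Fintype.card Y
        ≤ (∑ q ∈ S ×ˢ B, #{g : G | g • q.1 = q.2}) * Fintype.card Y :=
          Nat.mul_le_mul_right _ ((card_le_card hcover).trans card_biUnion_le)
      _ = Fintype.card G * (#S * #B) := by
          rw [sum_mul, sum_congr rfl fun q _ ↦ card_smul_eq_mul_card G q.1 q.2, sum_const,
            card_product, smul_eq_mul, mul_comm]
  exact h.not_ge (Nat.le_of_mul_le_mul_left hle Fintype.card_pos)

lemma exists_perm_forall_image_notMem {β : Type*} [Fintype β] [DecidableEq β] {t : ℕ}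
    {𝒜 : Finset (Finset β)} (h𝒜 : ∀ A ∈ 𝒜, #A = t) (ℬ : Finset (Finset β))
    (h : #𝒜 * #ℬ < (Fintype.card β).choose t) :
    ∃ σ : Equiv.Perm β, ∀ A ∈ 𝒜, A.image σ ∉ ℬ := by
  classical
  have := Set.powersetCard.isPretransitive (α := β) (n := t)
  have hcard : ∀ 𝒞 : Finset (Finset β), #(𝒞.subtype (· ∈ Set.powersetCard β t)) ≤ #𝒞 :=
    fun 𝒞 ↦ (card_subtype _ _).trans_le (card_filter_le _ _)
  obtain ⟨σ, hσ⟩ := exists_smul_forall_notMem (Equiv.Perm β)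
    (𝒜.subtype (· ∈ Set.powersetCard β t)) (ℬ.subtype (· ∈ Set.powersetCard β t)) (by
      rw [Set.powersetCard.card, Nat.card_eq_fintype_card]
      exact (Nat.mul_le_mul (hcard 𝒜) (hcard ℬ)).trans_lt h)
  exact ⟨σ, fun A hA hσA ↦ hσ ⟨A, h𝒜 A hA⟩ (mem_subtype.2 hA) (mem_subtype.2 hσA)⟩

end Separation

section Slots

variable {ι κ : Type*} [Fintype ι] [Fintype κ] [DecidableEq ι]

variable (ι κ) in
/-- The `t`-element sets of slots that hit fewer than `u` points, where `ι × κ` is the set of slots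
and the slot `(i, j)` hits the point `i`. These are the bad events of the union bound. -/
noncomputable def narrowSets (t : ℕ) (u : ℝ) : Finset (Finset (ι × κ)) :=
  {T | #T = t ∧ #(T.image Prod.fst) < u}

lemma exists_forall_le_card_biUnion {k : ℕ} {u : ℝ}
    (h : (Fintype.card ι).choose k * #(narrowSets ι κ (k * Fintype.card κ) u) <
      (Fintype.card ι * Fintype.card κ).choose (k * Fintype.card κ)) :
    ∃ X : ι → Finset ι, (∀ i, #(X i) ≤ Fintype.card κ) ∧
      ∀ A : Finset ι, #A = k → u ≤ #(A.biUnion X) := by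
  classical
  have hblock : ∀ A : Finset ι, #A = k → #(A ×ˢ (univ : Finset κ)) = k * Fintype.card κ := by
    rintro A rfl
    rw [card_product, card_univ]
  obtain ⟨σ, hσ⟩ := exists_perm_forall_image_notMem (t := k * Fintype.card κ)
    (𝒜 := (powersetCard k univ).image fun A : Finset ι ↦ A ×ˢ (univ : Finset κ))
    (by simpa using hblock) (narrowSets ι κ (k * Fintype.card κ) u) (by
      rw [Fintype.card_prod]
      refine (Nat.mul_le_mul_right _ card_image_le).trans_lt ?_
      rwa [card_powersetCard, card_univ])
  refine ⟨fun i ↦ univ.image fun j ↦ (σ (i, j)).1, fun i ↦ card_image_le, fun A hA ↦ ?_⟩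
  have hunion : (A.biUnion fun i ↦ univ.image fun j ↦ (σ (i, j)).1) =
      ((A ×ˢ (univ : Finset κ)).image σ).image Prod.fst := by
    ext p
    simp [Prod.ext_iff]
  have hwide := hσ _ (mem_image_of_mem _ (mem_powersetCard.2 ⟨subset_univ A, hA⟩))
  simpa [narrowSets, card_image_of_injective _ σ.injective, hblock A hA, hunion] using hwide

/-- A set of slots `T ⊆ ι × κ` recorded through its rows `{j | (i, j) ∈ T}`, which turns sums over
`T` of products over `ι` into products of sums over single rows. -/
def rowsEquiv [DecidableEq κ] : Finset (ι × κ) ≃ (ι → Finset κ) where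
  toFun T i := {j | (i, j) ∈ T}
  invFun rows := {q | q.2 ∈ rows q.1}
  left_inv T := by ext; simp
  right_inv rows := by ext; simp

lemma card_eq_sum_card_rowsEquiv [DecidableEq κ] (T : Finset (ι × κ)) :
    #T = ∑ i, #(rowsEquiv T i) :=
  calc #T = ∑ q, if q ∈ T then 1 else 0 := by simp
    _ = ∑ i, ∑ j, if (i, j) ∈ T then 1 else 0 := Fintype.sum_prod_type _
    _ = ∑ i, #(rowsEquiv T i) := by simp [rowsEquiv]

lemma image_fst_eq_filter_rowsEquiv_nonempty [DecidableEq κ] (T : Finset (ι × κ)) :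
    T.image Prod.fst = univ.filter fun i ↦ (rowsEquiv T i).Nonempty := by
  ext i
  simp [rowsEquiv, Finset.Nonempty]

variable {R : Type*} [CommRing R]

lemma sum_ite_nonempty_mul_pow_card (x z : R) :
    ∑ S : Finset κ, (if S.Nonempty then z * x ^ #S else 1) =
      1 + z * ((1 + x) ^ Fintype.card κ - 1) := by
  classical
  have hsplit : ∀ S : Finset κ, (if S.Nonempty then z * x ^ #S else 1) =
      z * x ^ #S + if S = ∅ then 1 - z else 0 := by
    intro S
    rcases S.eq_empty_or_nonempty with rfl | hS
    · simp
    · simp [hS, hS.ne_empty]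
  have hbinom : ∑ S : Finset κ, x ^ #S = (1 + x) ^ Fintype.card κ := by
    simpa [add_comm] using Fintype.sum_pow_mul_eq_add_pow κ x 1
  simp only [hsplit, sum_add_distrib, ← mul_sum, hbinom, sum_ite_eq', mem_univ, if_true]
  ring

lemma sum_pow_card_image_fst_mul_pow_card (x z : R) :
    ∑ T : Finset (ι × κ), z ^ #(T.image Prod.fst) * x ^ #T =
      (1 + z * ((1 + x) ^ Fintype.card κ - 1)) ^ Fintype.card ι := by
  classical
  have hterm : ∀ T : Finset (ι × κ), z ^ #(T.image Prod.fst) * x ^ #T =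
      ∏ i, if (rowsEquiv T i).Nonempty then z * x ^ #(rowsEquiv T i) else 1 := by
    intro T
    rw [image_fst_eq_filter_rowsEquiv_nonempty, card_filter, card_eq_sum_card_rowsEquiv,
      ← prod_pow_eq_pow_sum, ← prod_pow_eq_pow_sum, ← prod_mul_distrib]
    refine prod_congr rfl fun i _ ↦ ?_
    rcases (rowsEquiv T i).eq_empty_or_nonempty with hi | hi <;> simp [hi]
  calc ∑ T : Finset (ι × κ), z ^ #(T.image Prod.fst) * x ^ #T
      = ∑ rows : ι → Finset κ, ∏ i, if (rows i).Nonempty then z * x ^ #(rows i) else 1 :=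
        Fintype.sum_equiv rowsEquiv _ _ hterm
    _ = ∏ _i : ι, ∑ S : Finset κ, if S.Nonempty then z * x ^ #S else 1 :=
        (Fintype.prod_sum fun _ S ↦ if S.Nonempty then z * x ^ #S else 1).symm
    _ = (1 + z * ((1 + x) ^ Fintype.card κ - 1)) ^ Fintype.card ι := by
        rw [sum_ite_nonempty_mul_pow_card, prod_const, card_univ]

lemma card_narrowSets_mul_le {x z : ℝ} (hx : 0 ≤ x) (hz₀ : 0 < z) (hz₁ : z ≤ 1) (t : ℕ) (u : ℝ) :
    #(narrowSets ι κ t u) * (z ^ u * x ^ t) ≤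
      (1 + z * ((1 + x) ^ Fintype.card κ - 1)) ^ Fintype.card ι := by
  rw [← sum_pow_card_image_fst_mul_pow_card, ← nsmul_eq_mul]
  calc #(narrowSets ι κ t u) • (z ^ u * x ^ t)
      ≤ ∑ T ∈ narrowSets ι κ t u, z ^ #(T.image Prod.fst) * x ^ #T := by
        refine card_nsmul_le_sum _ _ _ fun T hT ↦ ?_
        obtain ⟨rfl, hu⟩ := (mem_filter.1 hT).2
        rw [← Real.rpow_natCast z]
        gcongr ?_ * _
        exact Real.rpow_le_rpow_of_exponent_ge hz₀ hz₁ hu.le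
    _ ≤ ∑ T : Finset (ι × κ), z ^ #(T.image Prod.fst) * x ^ #T :=
        sum_le_sum_of_subset_of_nonneg (subset_univ _) fun _ _ _ ↦ by positivity

end Slots

section Binomial

lemma choose_mul_choose_le_choose_add (a b i j : ℕ) :
    a.choose i * b.choose j ≤ (a + b).choose (i + j) := by
  rw [Nat.add_choose_eq]
  exact single_le_sum (f := fun q : ℕ × ℕ ↦ a.choose q.1 * b.choose q.2)
    (fun _ _ ↦ Nat.zero_le _) (a := (i, j)) (mem_antidiagonal.2 rfl)

lemma choose_pow_le_choose_mul (n k c : ℕ) : n.choose k ^ c ≤ (n * c).choose (k * c) := by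
  induction c with
  | zero => simp
  | succ c ih =>
    calc n.choose k ^ (c + 1) ≤ (n * c).choose (k * c) * n.choose k := by
          rw [pow_succ]
          exact Nat.mul_le_mul_right _ ih
      _ ≤ (n * (c + 1)).choose (k * (c + 1)) :=
          choose_mul_choose_le_choose_add _ _ _ _

lemma choose_mul_lt_choose_mul_succ {n k c N : ℕ} (hk : k ≤ n) (h : N < n.choose k ^ c) :
    n.choose k * N < (n * (c + 1)).choose (k * (c + 1)) :=
  calc n.choose k * N < n.choose k * n.choose k ^ c :=
        Nat.mul_lt_mul_of_pos_left h (Nat.choose_pos hk)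
    _ = n.choose k ^ (c + 1) := (pow_succ' _ _).symm
    _ ≤ (n * (c + 1)).choose (k * (c + 1)) := choose_pow_le_choose_mul n k (c + 1)

/-- The probability that a binomial random variable with parameters `n` and `p` equals `j`. Its
value at the mode `⌊p * (n + 1)⌋₊` bounds `n.choose ⌊p * (n + 1)⌋₊` from below. -/
def binomialWeight (p : ℝ) (n j : ℕ) : ℝ := n.choose j * (p ^ j * (1 - p) ^ (n - j))

lemma binomialWeight_succ_mul (p : ℝ) (n j : ℕ) :
    binomialWeight p n (j + 1) * ((j + 1) * (1 - p)) = binomialWeight p n j * ((n - j) * p) := by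
  rcases lt_trichotomy j n with hj | rfl | hj
  · have hchoose : (n.choose (j + 1) : ℝ) * (j + 1) = n.choose j * (n - j) := by
      rw [← Nat.cast_sub hj.le]
      exact_mod_cast Nat.choose_succ_right_eq n j
    have hsub : n - j = n - (j + 1) + 1 := by omega
    unfold binomialWeight
    rw [hsub, pow_succ p, pow_succ (1 - p)]
    linear_combination p ^ j * p * ((1 - p) ^ (n - (j + 1)) * (1 - p)) * hchoose
  · simp [binomialWeight]
  · simp [binomialWeight, Nat.choose_eq_zero_of_lt hj,
      Nat.choose_eq_zero_of_lt (hj.trans j.lt_succ_self)]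

variable {p : ℝ}

lemma binomialWeight_nonneg (hp₀ : 0 ≤ p) (hp₁ : p ≤ 1) (n j : ℕ) : 0 ≤ binomialWeight p n j := by
  have := sub_nonneg.2 hp₁
  unfold binomialWeight
  positivity

lemma monotoneOn_binomialWeight (hp₀ : 0 ≤ p) (hp₁ : p < 1) (n : ℕ) :
    MonotoneOn (binomialWeight p n) (Set.Iic ⌊p * (n + 1)⌋₊) := by
  refine monotoneOn_of_le_add_one Set.ordConnected_Iic fun j _ _ hj ↦ ?_
  have hj' : (j + 1 : ℝ) ≤ p * (n + 1) := by
    exact_mod_cast (Nat.le_floor_iff (by positivity)).1 hj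
  refine le_of_mul_le_mul_right ?_ (mul_pos j.cast_add_one_pos (sub_pos.2 hp₁))
  rw [binomialWeight_succ_mul]
  exact mul_le_mul_of_nonneg_left (by linarith) (binomialWeight_nonneg hp₀ hp₁.le n j)

lemma antitoneOn_binomialWeight (hp₀ : 0 ≤ p) (hp₁ : p < 1) (n : ℕ) :
    AntitoneOn (binomialWeight p n) (Set.Ici ⌊p * (n + 1)⌋₊) := by
  refine antitoneOn_of_add_one_le Set.ordConnected_Ici fun j _ hj _ ↦ ?_
  have hj' : p * (n + 1) < j + 1 := by
    exact_mod_cast Nat.lt_of_floor_lt (Nat.lt_succ_of_le hj)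
  refine le_of_mul_le_mul_right ?_ (mul_pos j.cast_add_one_pos (sub_pos.2 hp₁))
  rw [binomialWeight_succ_mul]
  exact mul_le_mul_of_nonneg_left (by linarith) (binomialWeight_nonneg hp₀ hp₁.le n j)

lemma binomialWeight_le_floor (hp₀ : 0 ≤ p) (hp₁ : p < 1) (n j : ℕ) :
    binomialWeight p n j ≤ binomialWeight p n ⌊p * (n + 1)⌋₊ := by
  rcases le_total j ⌊p * (n + 1)⌋₊ with hj | hj
  · exact monotoneOn_binomialWeight hp₀ hp₁ n hj Set.self_mem_Iic hj
  · exact antitoneOn_binomialWeight hp₀ hp₁ n Set.self_mem_Ici hj hj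

lemma one_le_succ_mul_binomialWeight_floor (hp₀ : 0 ≤ p) (hp₁ : p < 1) (n : ℕ) :
    1 ≤ (n + 1) * binomialWeight p n ⌊p * (n + 1)⌋₊ :=
  calc (1 : ℝ) = ∑ j ∈ range (n + 1), binomialWeight p n j := by
        have hsum := add_pow p (1 - p) n
        rw [add_sub_cancel, one_pow] at hsum
        rw [hsum]
        exact sum_congr rfl fun j _ ↦ mul_comm _ _
    _ ≤ ∑ _j ∈ range (n + 1), binomialWeight p n ⌊p * (n + 1)⌋₊ :=
        sum_le_sum fun j _ ↦ binomialWeight_le_floor hp₀ hp₁ n j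
    _ = (n + 1) * binomialWeight p n ⌊p * (n + 1)⌋₊ := by simp

end Binomial

section Asymptotics

variable {p : ℝ}

lemma rpow_le_exp_abs_log {b t : ℝ} (hb : 0 < b) (ht : |t| ≤ 1) :
    b ^ t ≤ Real.exp |Real.log b| := by
  rw [Real.rpow_def_of_pos hb, Real.exp_le_exp]
  calc Real.log b * t ≤ |Real.log b| * |t| := (le_abs_self _).trans (abs_mul _ _).le
    _ ≤ |Real.log b| := mul_le_of_le_one_right (abs_nonneg _) ht

lemma floor_mul_succ_le (hp₀ : 0 ≤ p) (hp₁ : p < 1) (n : ℕ) : ⌊p * (n + 1)⌋₊ ≤ n := by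
  have hlt : p * (n + 1) < (n + 1 : ℕ) := by
    push_cast
    exact mul_lt_of_lt_one_left n.cast_add_one_pos hp₁
  exact Nat.lt_succ_iff.1 ((Nat.floor_lt (by positivity)).2 hlt)

lemma pow_floor_le {b : ℝ} (hb : 0 < b) (hp₀ : 0 ≤ p) (hp₁ : p ≤ 1) (n : ℕ) :
    b ^ ⌊p * (n + 1)⌋₊ ≤ Real.exp |Real.log b| * (b ^ p) ^ n := by
  have hle : (⌊p * (n + 1)⌋₊ : ℝ) ≤ p * (n + 1) := Nat.floor_le (by positivity)
  have hlt := Nat.lt_floor_add_one (p * (n + 1))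
  have habs : |(⌊p * (n + 1)⌋₊ : ℝ) - p * n| ≤ 1 := by
    rw [abs_le]
    constructor <;> linarith
  calc b ^ ⌊p * (n + 1)⌋₊ = b ^ ((⌊p * (n + 1)⌋₊ : ℝ) - p * n) * (b ^ p) ^ n := by
        rw [← Real.rpow_natCast (b ^ p), ← Real.rpow_mul hb.le, ← Real.rpow_add hb, sub_add_cancel,
          Real.rpow_natCast]
    _ ≤ Real.exp |Real.log b| * (b ^ p) ^ n := by
        gcongr
        exact rpow_le_exp_abs_log hb habs

lemma tendsto_succ_pow_mul_pow {r : ℝ} (hr₀ : 0 < r) (hr₁ : r < 1) (c : ℕ) :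
    Tendsto (fun n : ℕ ↦ ((n : ℝ) + 1) ^ c * r ^ n) atTop (𝓝 0) := by
  have hshift := (tendsto_pow_const_mul_const_pow_of_lt_one c hr₀.le hr₁).comp
    (tendsto_add_atTop_nat 1)
  convert hshift.mul_const r⁻¹ using 2 with n
  · simp only [Function.comp_apply, Nat.cast_add, Nat.cast_one, pow_succ r]
    field_simp
  · rw [zero_mul]

lemma tendsto_succ_pow_mul_pow_mul_pow_floor {a b : ℝ} (ha : 0 < a) (hb : 0 < b) (hp₀ : 0 ≤ p)
    (hp₁ : p ≤ 1) (h : a * b ^ p < 1) (c : ℕ) :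
    Tendsto (fun n : ℕ ↦ ((n : ℝ) + 1) ^ c * (a ^ n * b ^ ⌊p * (n + 1)⌋₊)) atTop (𝓝 0) := by
  have hlim := (tendsto_succ_pow_mul_pow (r := a * b ^ p) (by positivity) h c).const_mul
    (Real.exp |Real.log b|)
  rw [mul_zero] at hlim
  refine squeeze_zero (fun n ↦ by positivity) (fun n ↦ ?_) hlim
  calc ((n : ℝ) + 1) ^ c * (a ^ n * b ^ ⌊p * (n + 1)⌋₊)
      ≤ ((n : ℝ) + 1) ^ c * (a ^ n * (Real.exp |Real.log b| * (b ^ p) ^ n)) := by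
        gcongr
        exact pow_floor_le hb hp₀ hp₁ n
    _ = Real.exp |Real.log b| * (((n : ℝ) + 1) ^ c * (a * b ^ p) ^ n) := by ring

lemma eventually_pow_mul_pow_lt {c : ℕ} {δ r x z : ℝ} (hp₀ : 0 < p) (hp₁ : p < 1) (hr : 0 < r)
    (hx : 0 < x) (hz : 0 < z)
    (hrate : r * (p ^ p * (1 - p) ^ (1 - p)) ^ c < z ^ (p + δ) * (x ^ p) ^ (c + 1)) :
    ∀ᶠ n : ℕ in atTop,
      r ^ n * ((n + 1) * (p ^ ⌊p * (n + 1)⌋₊ * (1 - p) ^ (n - ⌊p * (n + 1)⌋₊))) ^ c <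
        z ^ (⌊p * (n + 1)⌋₊ + δ * n) * x ^ (⌊p * (n + 1)⌋₊ * (c + 1)) := by
  have hq : 0 < 1 - p := sub_pos.2 hp₁
  set a : ℝ := r * (1 - p) ^ c / z ^ δ with ha
  set b : ℝ := (p / (1 - p)) ^ c / (z * x ^ (c + 1)) with hb
  have hab : a * b ^ p < 1 := by
    have hbp : b ^ p = (p ^ p / (1 - p) ^ p) ^ c / (z ^ p * (x ^ p) ^ (c + 1)) := by
      rw [hb, Real.div_rpow (by positivity) (by positivity), ← Real.rpow_pow_comm (by positivity),
        Real.div_rpow hp₀.le hq.le, Real.mul_rpow hz.le (by positivity),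
        ← Real.rpow_pow_comm hx.le]
    rw [Real.rpow_sub hq, Real.rpow_one, Real.rpow_add hz] at hrate
    calc a * b ^ p = r * (p ^ p * ((1 - p) / (1 - p) ^ p)) ^ c /
          (z ^ p * z ^ δ * (x ^ p) ^ (c + 1)) := by
          rw [ha, hbp]
          simp only [mul_pow, div_pow]
          field_simp
      _ < 1 := (div_lt_one (by positivity)).2 hrate
  have hfactor {n k : ℕ} (hk : k ≤ n) : r ^ n * ((n + 1) * (p ^ k * (1 - p) ^ (n - k))) ^ c =
      (n + 1) ^ c * (a ^ n * b ^ k) * (z ^ (k + δ * n) * x ^ (k * (c + 1))) := by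
    obtain ⟨m, rfl⟩ := Nat.exists_eq_add_of_le hk
    rw [Real.rpow_add hz, Real.rpow_mul hz.le, Real.rpow_natCast, Real.rpow_natCast, ha, hb,
      Nat.add_sub_cancel_left]
    simp only [div_pow, mul_pow, pow_add, pow_mul, pow_right_comm _ c]
    field_simp
  have hlim := tendsto_succ_pow_mul_pow_mul_pow_floor (a := a) (b := b) (by positivity)
    (by positivity) hp₀.le hp₁.le hab c
  filter_upwards [hlim.eventually_lt_const one_pos] with n hn
  rw [hfactor (floor_mul_succ_le hp₀.le hp₁ n)]
  exact mul_lt_of_lt_one_left (by positivity) hn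

end Asymptotics

section Main

variable {c : ℕ} {p δ x z : ℝ}

lemma eventually_card_narrowSets_lt_choose_pow (hp₀ : 0 < p) (hp₁ : p < 1) (hx : 0 < x)
    (hz₀ : 0 < z) (hz₁ : z ≤ 1)
    (hrate : (1 + z * ((1 + x) ^ (c + 1) - 1)) * (p ^ p * (1 - p) ^ (1 - p)) ^ c <
      z ^ (p + δ) * (x ^ p) ^ (c + 1)) :
    ∀ᶠ n : ℕ in atTop,
      #(narrowSets (Fin n) (Fin (c + 1)) (⌊p * (n + 1)⌋₊ * (c + 1)) (⌊p * (n + 1)⌋₊ + δ * n)) <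
        n.choose ⌊p * (n + 1)⌋₊ ^ c := by
  have hr : 0 < 1 + z * ((1 + x) ^ (c + 1) - 1) := by
    have hpow : 1 ≤ (1 + x) ^ (c + 1) := one_le_pow₀ (by linarith)
    exact add_pos_of_pos_of_nonneg one_pos (mul_nonneg hz₀.le (sub_nonneg.2 hpow))
  filter_upwards [eventually_pow_mul_pow_lt hp₀ hp₁ hr hx hz₀ hrate] with n hn
  have hbinom := one_le_succ_mul_binomialWeight_floor hp₀.le hp₁ n
  set k := ⌊p * (n + 1)⌋₊
  set w : ℝ := (n + 1) * (p ^ k * (1 - p) ^ (n - k)) with hw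
  set y : ℝ := z ^ (k + δ * n) * x ^ (k * (c + 1))
  have hw₀ : 0 < w := by
    have := sub_pos.2 hp₁
    positivity
  have hy₀ : 0 < y := by positivity
  have hnarrow : #(narrowSets (Fin n) (Fin (c + 1)) (k * (c + 1)) (k + δ * n)) * y ≤
      (1 + z * ((1 + x) ^ (c + 1) - 1)) ^ n := by
    simpa only [Fintype.card_fin] using
      card_narrowSets_mul_le (ι := Fin n) (κ := Fin (c + 1)) hx.le hz₀ hz₁ (k * (c + 1)) _
  set N := #(narrowSets (Fin n) (Fin (c + 1)) (k * (c + 1)) (k + δ * n))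
  have hw_choose : 1 ≤ (w * n.choose k) ^ c := by
    refine one_le_pow₀ (hbinom.trans_eq ?_)
    rw [hw, binomialWeight]
    ring
  have hreal : (N : ℝ) * (y * w ^ c) < n.choose k ^ c * (y * w ^ c) :=
    calc (N : ℝ) * (y * w ^ c) = N * y * w ^ c := (mul_assoc _ _ _).symm
      _ ≤ (1 + z * ((1 + x) ^ (c + 1) - 1)) ^ n * w ^ c :=
          mul_le_mul_of_nonneg_right hnarrow (pow_pos hw₀ c).le
      _ < y := hn
      _ ≤ y * (w * n.choose k) ^ c := le_mul_of_one_le_right hy₀.le hw_choose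
      _ = n.choose k ^ c * (y * w ^ c) := by rw [mul_pow, mul_comm (w ^ c), mul_left_comm]
  exact_mod_cast lt_of_mul_lt_mul_right hreal (mul_pos hy₀ (pow_pos hw₀ c)).le

theorem lower_bound_f3_general (hp₀ : 0 < p) (hp₁ : p < 1) (hx : 0 < x) (hz₀ : 0 < z) (hz₁ : z ≤ 1)
    (hrate : (1 + z * ((1 + x) ^ (c + 1) - 1)) * (p ^ p * (1 - p) ^ (1 - p)) ^ c <
      z ^ (p + δ) * (x ^ p) ^ (c + 1)) :
    ∀ᶠ n : ℕ in atTop, δ * n ≤ fFam n n (c + 1) ∧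
      ∃ X : Fin n → Finset (Fin n), (∀ i, #(X i) ≤ c + 1) ∧ δ * n ≤ DeltaMin X := by
  have hfloor : ∀ᶠ n : ℕ in atTop, 1 ≤ ⌊p * (n + 1)⌋₊ := by
    filter_upwards [eventually_ge_atTop ⌈p⁻¹⌉₊] with n hn
    have hpn : 1 ≤ p * n := (inv_le_iff_one_le_mul₀' hp₀).1 (Nat.ceil_le.1 hn)
    exact Nat.le_floor (by push_cast; linarith)
  filter_upwards [eventually_card_narrowSets_lt_choose_pow hp₀ hp₁ hx hz₀ hz₁ hrate, hfloor]
    with n hnarrow hk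
  have hkn := floor_mul_succ_le hp₀.le hp₁ n
  obtain ⟨X, hX, hunion⟩ := exists_forall_le_card_biUnion (ι := Fin n) (κ := Fin (c + 1))
    (k := ⌊p * (n + 1)⌋₊) (u := ⌊p * (n + 1)⌋₊ + δ * n)
    (by simpa only [Fintype.card_fin] using choose_mul_lt_choose_mul_succ hkn hnarrow)
  rw [Fintype.card_fin] at hX
  have hmin : δ * n ≤ DeltaMin X := by
    simpa using sub_le_DeltaMin_of_forall_le_card_biUnion hk hkn hunion
  exact ⟨hmin.trans (Int.cast_le.2 (DeltaMin_le_fFam hX)), X, hX, hmin⟩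

end Main

lemma rate_lt_twentyEight_div_sixtyOne : (1 + 1 / 180 * ((1 + 5) ^ (2 + 1) - 1) : ℝ) *
      ((28 / 61) ^ (28 / 61 : ℝ) * (1 - 28 / 61) ^ (1 - 28 / 61 : ℝ)) ^ 2 <
    (1 / 180) ^ (28 / 61 + 5 / 61 : ℝ) * (5 ^ (28 / 61 : ℝ)) ^ (2 + 1) := by
  have hpow {a : ℝ} (ha : 0 ≤ a) (m : ℕ) : (a ^ (m / 61 : ℝ)) ^ 61 = a ^ m := by
    rw [← Real.rpow_mul_natCast ha, ← Real.rpow_natCast]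
    norm_num
  have h₁ : ((28 / 61 : ℝ) ^ (28 / 61 : ℝ)) ^ 61 = (28 / 61) ^ 28 := hpow (by norm_num) 28
  have h₂ : ((1 - 28 / 61 : ℝ) ^ (1 - 28 / 61 : ℝ)) ^ 61 = (33 / 61) ^ 33 := by
    convert hpow (a := 33 / 61) (by norm_num) 33 using 3 <;> norm_num
  have h₃ : ((1 / 180 : ℝ) ^ (28 / 61 + 5 / 61 : ℝ)) ^ 61 = (1 / 180) ^ 33 := by
    convert hpow (a := 1 / 180) (by norm_num) 33 using 3; norm_num
  have h₄ : ((5 : ℝ) ^ (28 / 61 : ℝ)) ^ 61 = 5 ^ 28 := hpow (by norm_num) 28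
  refine lt_of_pow_lt_pow_left₀ 61 (by positivity) ?_
  rw [mul_pow, pow_right_comm _ 2 61, mul_pow ((28 / 61 : ℝ) ^ (28 / 61 : ℝ)),
    mul_pow ((1 / 180 : ℝ) ^ _), pow_right_comm _ (2 + 1) 61, h₁, h₂, h₃, h₄]
  norm_num

/-- For all sufficiently large `n`, `f(n) ≥ 0.0818757697·n`: there is a family
`𝒳` of `n` subsets of an `n`-element ground set, each of size at most `3`,
with `Δ(𝒳) ≥ 0.0818757697·n`. -/
theorem lower_bound_f3 :
    ∃ N : ℕ, ∀ n : ℕ, N ≤ n →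
      (0.0818757697 : ℝ) * n ≤ (fFam n n 3 : ℝ) ∧
      ∃ X : Fin n → Finset (Fin n), (∀ i, (X i).card ≤ 3) ∧
        (0.0818757697 : ℝ) * n ≤ (DeltaMin X : ℝ) := by
  refine eventually_atTop.1 ?_
  filter_upwards [lower_bound_f3_general (by norm_num) (by norm_num) (by norm_num) (by norm_num)
    (by norm_num) rate_lt_twentyEight_div_sixtyOne] with n ⟨hf, X, hX, hmin⟩
  have hδ : (0.0818757697 : ℝ) * n ≤ 5 / 61 * n := by
    gcongr
    norm_num
  exact ⟨hδ.trans hf, X, hX, hδ.trans hmin⟩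
end

section
/- For every n ≥ 3, f(n) ≤ ⌈n/4⌉ + 2; that is, every family of n subsets of an n-element ground set, each of size at most 3, admits an ordering π with Δ(𝒳,π) ≤ ⌈n/4⌉ + 2. -/
open Finset

/-!
For a bound `B` on `Δ`, order the family backwards: take sets off the end so that the subfamily `K`
that remains, with `k` sets covering `u` points, keeps `u ≤ B + k`, `2u < 4B + k` and `u + 2 ≤ 4B`.
If `u ≤ k`, any set may be taken off. If `u > k`, then, all sets having at most three elements,
averaging gives a covered point in `d ≤ 2` sets of `K`, with `d * u ≤ 3k`; taking off these `d` sets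
lowers `k` by `d` and `u` by at least one. For `d = 2` the only danger is the prefix between the two
removals, and it is harmless because `2u ≤ 3k` and `2u < 4B + k` add up to `u < B + k`.
-/

section Peeling

variable {ι α : Type*} [DecidableEq α] {X : ι → Finset α} {K L : Finset ι} {B : ℤ}

/-- The subfamily of `K` formed by the sets through the point `p`; its size is the degree of `p`
in `K`. -/
def setsThrough (X : ι → Finset α) (K : Finset ι) (p : α) : Finset ι :=
  {i ∈ K | p ∈ X i}

/-- The numerical condition on a subfamily `K` that is preserved when sets are taken off one by one
or two by two in the construction of an ordering from its end. -/
structure Peelable (X : ι → Finset α) (B : ℤ) (K : Finset ι) : Prop where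
  card_le : (#(K.biUnion X) : ℤ) ≤ B + #K
  two_mul_card_lt : 2 * (#(K.biUnion X) : ℤ) < 4 * B + #K
  card_add_two_le : (#(K.biUnion X) : ℤ) + 2 ≤ 4 * B

lemma setsThrough_nonempty {p : α} (hp : p ∈ K.biUnion X) : (setsThrough X K p).Nonempty := by
  obtain ⟨i, hi, hpi⟩ := mem_biUnion.1 hp
  exact ⟨i, mem_filter.2 ⟨hi, hpi⟩⟩

lemma exists_card_mul_card_setsThrough_le {c : ℕ} (hX : ∀ i ∈ K, #(X i) ≤ c)
    (hK : (K.biUnion X).Nonempty) :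
    ∃ p ∈ K.biUnion X, #(K.biUnion X) * #(setsThrough X K p) ≤ #K * c := by
  obtain ⟨p, hp, hmin⟩ := exists_min_image (K.biUnion X) (fun q ↦ #(setsThrough X K q)) hK
  refine ⟨p, hp, card_mul_le_card_mul (fun q i ↦ q ∈ X i) hmin fun i hi ↦ ?_⟩
  exact (card_le_card fun q hq ↦ (mem_filter.1 hq).2).trans (hX i hi)

lemma card_biUnion_sdiff_setsThrough_lt [DecidableEq ι] {p : α} (hp : p ∈ K.biUnion X) :
    #((K \ setsThrough X K p).biUnion X) < #(K.biUnion X) := by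
  refine card_lt_card <| (ssubset_iff_of_subset <|
    biUnion_subset_biUnion_of_subset_left X sdiff_subset).2 ⟨p, hp, fun hp' ↦ ?_⟩
  obtain ⟨i, hi, hpi⟩ := mem_biUnion.1 hp'
  rw [mem_sdiff] at hi
  exact hi.2 (mem_filter.2 ⟨hi.1, hpi⟩)

lemma Peelable.exists_ssubset (hX : ∀ i ∈ K, #(X i) ≤ 3) (hK : Peelable X B K)
    (hne : K.Nonempty) :
    ∃ L ⊂ K, Peelable X B L ∧ (#(K.biUnion X) : ℤ) ≤ B + #L + 1 := by
  classical
  obtain ⟨h₁, h₂, h₃⟩ := hK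
  rcases le_or_gt #(K.biUnion X) #K with hle | hlt
  · obtain ⟨i, hi⟩ := hne
    have hcard := card_erase_add_one hi
    have hunion := card_le_card (biUnion_subset_biUnion_of_subset_left X (erase_subset i K))
    exact ⟨K.erase i, erase_ssubset hi, ⟨by omega, by omega, by omega⟩, by omega⟩
  · obtain ⟨p, hp, havg⟩ := exists_card_mul_card_setsThrough_le hX (card_pos.1 (by omega))
    have hthrough : setsThrough X K p ⊆ K := filter_subset _ _
    have hcard := card_sdiff_add_card_eq_card hthrough
    have hunion := card_biUnion_sdiff_setsThrough_lt hp
    have hpos : 0 < #(setsThrough X K p) := (setsThrough_nonempty hp).card_pos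
    have hlt_three : #(setsThrough X K p) < 3 :=
      lt_of_mul_lt_mul_left (havg.trans_lt (Nat.mul_lt_mul_of_pos_right hlt three_pos))
        (Nat.zero_le _)
    have hprefix : (#(K.biUnion X) : ℤ) ≤ B + #(K \ setsThrough X K p) + 1 := by
      obtain hd | hd : #(setsThrough X K p) = 1 ∨ #(setsThrough X K p) = 2 := by omega
      · omega
      · rw [hd] at havg
        omega
    exact ⟨K \ setsThrough X K p, sdiff_ssubset hthrough (setsThrough_nonempty hp),
      ⟨by omega, by omega, by omega⟩, hprefix⟩

variable [DecidableEq ι]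

/-- The subfamily `K` has an ordering all of whose initial segments `t` have `Δ ≤ B`, that is, cover
at most `B + |t|` points. Orderings are duplicate-free lists, and the empty initial segment is
included, so that `0 ≤ B` is implied. -/
def OrderableWithin (X : ι → Finset α) (B : ℤ) (K : Finset ι) : Prop :=
  ∃ l : List ι, l.Nodup ∧ l.toFinset = K ∧
    ∀ t, t <+: l → (#(t.toFinset.biUnion X) : ℤ) ≤ B + t.length

lemma OrderableWithin.of_subset (hLK : L ⊆ K) (hL : OrderableWithin X B L)
    (hcard : (#(K.biUnion X) : ℤ) ≤ B + #L + 1) : OrderableWithin X B K := by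
  obtain ⟨l, hnodup, rfl, hprefix⟩ := hL
  rw [List.toFinset_card_of_nodup hnodup] at hcard
  have htoFinset : (l ++ (K \ l.toFinset).toList).toFinset = K := by
    rw [List.toFinset_append, toList_toFinset, union_sdiff_of_subset hLK]
  refine ⟨l ++ (K \ l.toFinset).toList, hnodup.append (nodup_toList _) ?_, htoFinset, ?_⟩
  · intro i hil hi
    exact (mem_sdiff.1 (mem_toList.1 hi)).2 (List.mem_toFinset.2 hil)
  intro t ht
  rcases le_or_gt t.length l.length with htl | hlt
  · exact hprefix t (List.prefix_of_prefix_length_le ht (List.prefix_append ..) htl)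
  · have htK : t.toFinset ⊆ K := by
      rw [← htoFinset]
      exact fun i hi ↦ List.mem_toFinset.2 (ht.subset (List.mem_toFinset.1 hi))
    have := card_le_card (biUnion_subset_biUnion_of_subset_left X htK)
    omega

theorem Peelable.orderableWithin (hX : ∀ i ∈ K, #(X i) ≤ 3) (hK : Peelable X B K) :
    OrderableWithin X B K := by
  induction K using Finset.strongInduction with
  | H K ih =>
    rcases K.eq_empty_or_nonempty with rfl | hne
    · refine ⟨[], List.nodup_nil, rfl, fun t ht ↦ ?_⟩
      rw [List.prefix_nil.1 ht]
      exact hK.card_le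
    · obtain ⟨L, hLK, hL, hcard⟩ := hK.exists_ssubset hX hne
      exact (ih L hLK (fun i hi ↦ hX i (hLK.1 hi)) hL).of_subset hLK.1 hcard

end Peeling

section Permutation

variable {α : Type*} [DecidableEq α] {m : ℕ} {X : Fin m → Finset α} {B : ℤ}

lemma deltaPerm_le_of_forall_delta_le {π : Equiv.Perm (Fin m)} (hm : 0 < m)
    (h : ∀ k ≤ m, delta X π k ≤ B) : DeltaPerm X π ≤ B := by
  refine csSup_le ⟨_, 1, le_rfl, hm, rfl⟩ ?_
  rintro d ⟨k, -, hk, rfl⟩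
  exact h k hk

lemma deltaMin_le_deltaPerm (X : Fin m → Finset α) (π : Equiv.Perm (Fin m)) :
    DeltaMin X ≤ DeltaPerm X π := by
  refine csInf_le ((Set.finite_range (DeltaPerm X)).bddBelow.mono ?_) ⟨π, rfl⟩
  rintro d ⟨σ, rfl⟩
  exact Set.mem_range_self σ

lemma fFam_le_of_forall_exists_perm {n c : ℕ}
    (h : ∀ X : Fin m → Finset (Fin n), (∀ i, #(X i) ≤ c) →
      ∃ π : Equiv.Perm (Fin m), DeltaPerm X π ≤ B) : fFam n m c ≤ B := by
  refine csSup_le ⟨_, fun _ ↦ ∅, fun _ ↦ Nat.zero_le c, rfl⟩ ?_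
  rintro d ⟨X, hX, rfl⟩
  obtain ⟨π, hπ⟩ := h X hX
  exact (deltaMin_le_deltaPerm X π).trans hπ

lemma OrderableWithin.exists_perm_deltaPerm_le (hm : 0 < m) (h : OrderableWithin X B univ) :
    ∃ π : Equiv.Perm (Fin m), DeltaPerm X π ≤ B := by
  obtain ⟨l, hnodup, huniv, hprefix⟩ := h
  have hlength : l.length = m := by
    rw [← List.toFinset_card_of_nodup hnodup, huniv, card_univ, Fintype.card_fin]
  have hmem (i : Fin m) : i ∈ l := List.mem_toFinset.1 (huniv ▸ mem_univ i)
  let π : Equiv.Perm (Fin m) :=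
    (finCongr hlength.symm).trans (hnodup.getEquivOfForallMemList l hmem)
  refine ⟨π, deltaPerm_le_of_forall_delta_le hm fun k hk ↦ ?_⟩
  have hunion : unionUpTo X π k ⊆ (l.take k).toFinset.biUnion X := by
    refine biUnion_subset.2 fun i hi ↦ subset_biUnion_of_mem (s := (l.take k).toFinset) X ?_
    rw [List.mem_toFinset, List.mem_take_iff_getElem]
    exact ⟨i, lt_min (mem_filter.1 hi).2 (hlength.symm ▸ i.2), rfl⟩
  calc delta X π k ≤ #((l.take k).toFinset.biUnion X) - k :=
        sub_le_sub_right (Nat.cast_le.2 (card_le_card hunion)) _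
    _ ≤ B := by
        have := hprefix (l.take k) (List.take_prefix k l)
        rw [List.length_take_of_le (hlength.symm ▸ hk)] at this
        omega

end Permutation

/-- For `m = n` the three inequalities amount to `n + 2 ≤ 4 * B`, so that
`f(n) ≤ ⌈(n + 2) / 4⌉`. -/
theorem upper_bound_f3_general {n m : ℕ} {B : ℤ} (hm : 0 < m) (h₁ : (n : ℤ) ≤ B + m)
    (h₂ : 2 * (n : ℤ) < 4 * B + m) (h₃ : (n : ℤ) + 2 ≤ 4 * B) :
    fFam n m 3 ≤ B ∧
    ∀ X : Fin m → Finset (Fin n), (∀ i, #(X i) ≤ 3) →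
      ∃ π : Equiv.Perm (Fin m), DeltaPerm X π ≤ B := by
  have hperm (X : Fin m → Finset (Fin n)) (hX : ∀ i, #(X i) ≤ 3) :
      ∃ π : Equiv.Perm (Fin m), DeltaPerm X π ≤ B := by
    have hunion : #(univ.biUnion X) ≤ n := card_finset_fin_le _
    have hcard : #(univ : Finset (Fin m)) = m := card_fin m
    have hpeelable : Peelable X B univ := ⟨by omega, by omega, by omega⟩
    exact (hpeelable.orderableWithin fun i _ ↦ hX i).exists_perm_deltaPerm_le hm
  exact ⟨fFam_le_of_forall_exists_perm hperm, hperm⟩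

/-- For every `n ≥ 3`, `f(n) ≤ ⌈n/4⌉ + 2`: every family of `n` subsets of an
`n`-element ground set, each of size at most `3`, admits an ordering `π` with
`Δ(𝒳,π) ≤ ⌈n/4⌉ + 2`. -/
theorem upper_bound_f3 (n : ℕ) (hn : 3 ≤ n) :
    fFam n n 3 ≤ ⌈(n : ℚ) / 4⌉ + 2 ∧
    ∀ X : Fin n → Finset (Fin n), (∀ i, (X i).card ≤ 3) →
      ∃ π : Equiv.Perm (Fin n), DeltaPerm X π ≤ ⌈(n : ℚ) / 4⌉ + 2 := by
  have hceil : (n : ℤ) ≤ 4 * ⌈(n : ℚ) / 4⌉ := by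
    exact_mod_cast (div_le_iff₀' (by norm_num)).1 (Int.le_ceil ((n : ℚ) / 4))
  exact upper_bound_f3_general (by omega) (by omega) (by omega) (by omega)
end
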